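/- Monotonicity of λ/(1−μ): Let (r, m, φ) be a solution on D. Let (u, v) ∈ D be such that the segment [u, −R] × {v} is contained in D, and suppose ν < 0 on this segment and (λ/(1−μ))(−R, v) ≥ 0. Then (λ/(1−μ))(u, v) = (λ/(1−μ))(−R, v) · exp(−∫_{u}^{−R} (ζ²/(rν))(ũ, v) dũ) ≥ (λ/(1−μ))(−R, v). -/

import Mathlib

/-!
Write `κ = λ/(1-μ)`. The equations for `∂λ/∂u` and `∂m/∂u` combine so that the terms in `m ν / r²`
cancel, leaving the linear ODE `∂κ/∂u = κ · ζ²/(rν)` (`kappa_deriv`). Integrating it along the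
segment `[u, -R] × {v}` (`linear_ode_exp`) gives the exponential formula, and since `ζ²/(rν) ≤ 0`
where `ν < 0`, the exponential factor is at least `1`.

The partial derivatives are taken within `D`, which has the unique differentiability property as a
relatively open subset of a quadrant; hence `λ` is `C¹` on `D`, and `∂/∂u` is the genuine one-sided
or two-sided derivative along the segment.
-/

open Set Real

noncomputable section

/-- The quadrant `Q_R = (-∞, -R] × [R, ∞)` in null coordinates `(u, v)`. -/
def Quad (R : ℝ) : Set (ℝ × ℝ) := Iic (-R) ×ˢ Ici R

/-- Partial derivative in the `u` (first) direction, within the set `D`. -/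
def pdu (D : Set (ℝ × ℝ)) (f : ℝ × ℝ → ℝ) (p : ℝ × ℝ) : ℝ :=
  fderivWithin ℝ f D p (1, 0)

/-- Partial derivative in the `v` (second) direction, within the set `D`. -/
def pdv (D : Set (ℝ × ℝ)) (f : ℝ × ℝ → ℝ) (p : ℝ × ℝ) : ℝ :=
  fderivWithin ℝ f D p (0, 1)

/-- `D` is a past set in `Q_R`: with `(u,v) ∈ D`, any `(ũ,ṽ) ∈ Q_R` with
`ũ ≥ u`, `ṽ ≤ v` lies in `D`. -/
def IsPastSet (R : ℝ) (D : Set (ℝ × ℝ)) : Prop :=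
  ∀ p ∈ D, ∀ q ∈ Quad R, p.1 ≤ q.1 → q.2 ≤ p.2 → q ∈ D

/-- A solution of the spherically symmetric Einstein–scalar field system on a
relatively open subset `D ⊆ Q_R`.  Writing `ν = ∂r/∂u`, `λ = ∂r/∂v`,
`ζ = r ∂φ/∂u`, `θ = r ∂φ/∂v`, `μ = 2m/r`, the equations are:
`∂λ/∂u = λ (2ν/(1-μ)) (m/r²)`, `∂ν/∂v = ν (2λ/(1-μ)) (m/r²)`,
`ν ∂m/∂u = ½(1-μ)ζ²`, `λ ∂m/∂v = ½(1-μ)θ²`,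
`∂θ/∂u = -ζλ/r`, `∂ζ/∂v = -θν/r`. -/
structure EFSol (R : ℝ) (D : Set (ℝ × ℝ)) (r m φ : ℝ × ℝ → ℝ) : Prop where
  subset : D ⊆ Quad R
  relOpen : ∃ U : Set (ℝ × ℝ), IsOpen U ∧ D = U ∩ Quad R
  hr : ContDiffOn ℝ 2 r D
  hm : ContDiffOn ℝ 2 m D
  hphi : ContDiffOn ℝ 2 φ D
  rpos : ∀ p ∈ D, 0 < r p
  mu_ne : ∀ p ∈ D, 2 * m p ≠ r p
  eq_lam : ∀ p ∈ D, pdu D (fun q => pdv D r q) p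
      = pdv D r p * (2 * pdu D r p / (1 - 2 * m p / r p)) * (m p / (r p) ^ 2)
  eq_nu : ∀ p ∈ D, pdv D (fun q => pdu D r q) p
      = pdu D r p * (2 * pdv D r p / (1 - 2 * m p / r p)) * (m p / (r p) ^ 2)
  eq_mu : ∀ p ∈ D, pdu D r p * pdu D m p
      = (1 / 2) * (1 - 2 * m p / r p) * (r p * pdu D φ p) ^ 2
  eq_mv : ∀ p ∈ D, pdv D r p * pdv D m p
      = (1 / 2) * (1 - 2 * m p / r p) * (r p * pdv D φ p) ^ 2
  eq_theta : ∀ p ∈ D, pdu D (fun q => r q * pdv D φ q) p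
      = -(r p * pdu D φ p) * pdv D r p / r p
  eq_zeta : ∀ p ∈ D, pdv D (fun q => r q * pdu D φ q) p
      = -(r p * pdv D φ p) * pdu D r p / r p

/-- Characteristic initial conditions with parameters `C`, `M`, `m₀`, posed on the
rays `{-R} × [R,∞)` (where `λ = 1`, `|rφ| ≤ C`, `m ≤ M`) and
`(-∞,-R] × {R}` (where `ν = -1`, `|∂_u(rφ)| ≤ C/u²`, `m ≤ M`), with
`r(-R,R) = R` and `m(-R,R) = m₀`, on a past set `D`. -/
structure CharIC (R C M m₀ : ℝ) (D : Set (ℝ × ℝ)) (r m φ : ℝ × ℝ → ℝ) : Prop where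
  past : IsPastSet R D
  ray_out : ∀ v ≥ R, ((-R, v) : ℝ × ℝ) ∈ D
  ray_in : ∀ u ≤ -R, ((u, R) : ℝ × ℝ) ∈ D
  r_corner : r (-R, R) = R
  m_corner : m (-R, R) = m₀
  lam_one : ∀ v ≥ R, pdv D r (-R, v) = 1
  rphi_bound : ∀ v ≥ R, |r (-R, v) * φ (-R, v)| ≤ C
  m_bound_out : ∀ v ≥ R, m (-R, v) ≤ M
  nu_one : ∀ u ≤ -R, pdu D r (u, R) = -1
  durphi_bound : ∀ u ≤ -R, |pdu D (fun q => r q * φ q) (u, R)| ≤ C / u ^ 2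
  m_bound_in : ∀ u ≤ -R, m (u, R) ≤ M

end

open Set Real


lemma uniqueDiffOn_of_relOpen {R : ℝ} {D : Set (ℝ × ℝ)}
    (h : ∃ U : Set (ℝ × ℝ), IsOpen U ∧ D = U ∩ Quad R) : UniqueDiffOn ℝ D := by
  obtain ⟨U, hU, rfl⟩ := h
  rw [inter_comm]
  exact ((uniqueDiffOn_Iic (-R)).prod (uniqueDiffOn_Ici R)).inter hU

/-- The directional derivatives of a `C²` function within `D` are `C¹` on `D`. -/
lemma contDiffOn_dirDeriv {D : Set (ℝ × ℝ)} (hD : UniqueDiffOn ℝ D) {f : ℝ × ℝ → ℝ}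
    (hf : ContDiffOn ℝ 2 f D) (e : ℝ × ℝ) :
    ContDiffOn ℝ 1 (fun q => fderivWithin ℝ f D q e) D :=
  (hf.fderivWithin hD (by norm_num)).clm_apply contDiffOn_const

/-- Along a horizontal segment in `D`, `pdu D f` is the derivative of `t ↦ f (t, v)`. -/
lemma hasDerivWithinAt_pdu {D : Set (ℝ × ℝ)} {f : ℝ × ℝ → ℝ} {S : Set ℝ} {t v : ℝ}
    (hS : ∀ s ∈ S, ((s, v) : ℝ × ℝ) ∈ D) (hf : DifferentiableWithinAt ℝ f D (t, v)) :
    HasDerivWithinAt (fun s => f (s, v)) (pdu D f (t, v)) S t := by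
  have hpath : HasDerivWithinAt (fun s : ℝ => ((s, v) : ℝ × ℝ)) (1, 0) S t :=
    (hasDerivWithinAt_id t S).prodMk (hasDerivWithinAt_const t S v)
  exact hf.hasFDerivWithinAt.comp_hasDerivWithinAt t hpath hS

/-- The ODE `∂κ/∂u = κ · ζ²/(rν)` for `κ = λ/(1-μ)`. -/
lemma kappa_deriv {R : ℝ} {D : Set (ℝ × ℝ)} {r m φ : ℝ × ℝ → ℝ} (hsol : EFSol R D r m φ)
    {S : Set ℝ} {t v : ℝ} (hS : ∀ s ∈ S, ((s, v) : ℝ × ℝ) ∈ D) (ht : t ∈ S)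
    (hν : pdu D r (t, v) < 0) :
    HasDerivWithinAt (fun s => pdv D r (s, v) / (1 - 2 * m (s, v) / r (s, v)))
      (pdv D r (t, v) / (1 - 2 * m (t, v) / r (t, v)) *
        ((r (t, v) * pdu D φ (t, v)) ^ 2 / (r (t, v) * pdu D r (t, v)))) S t := by
  have hp := hS t ht
  have hD := uniqueDiffOn_of_relOpen hsol.relOpen
  have dr := hasDerivWithinAt_pdu hS (hsol.hr.differentiableOn (by norm_num) _ hp)
  have dm := hasDerivWithinAt_pdu hS (hsol.hm.differentiableOn (by norm_num) _ hp)
  have dl : HasDerivWithinAt (fun s => pdv D r (s, v)) (pdu D (fun q => pdv D r q) (t, v)) S t :=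
    hasDerivWithinAt_pdu hS
      ((contDiffOn_dirDeriv hD hsol.hr (0, 1)).differentiableOn (by norm_num) _ hp)
  have hr := (hsol.rpos _ hp).ne'
  have hrm : r (t, v) - 2 * m (t, v) ≠ 0 := sub_ne_zero.mpr (hsol.mu_ne _ hp).symm
  have hμ : 1 - 2 * m (t, v) / r (t, v) ≠ 0 := by
    rw [one_sub_div hr]
    exact div_ne_zero hrm hr
  have key := dl.div (((dm.const_mul 2).div dr hr).const_sub 1) hμ
  refine key.congr_deriv ?_
  have e1 := hsol.eq_lam _ hp
  have e2 : pdu D m (t, v) = (1 / 2) * (1 - 2 * m (t, v) / r (t, v))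
      * (r (t, v) * pdu D φ (t, v)) ^ 2 / pdu D r (t, v) := by
    rw [eq_div_iff hν.ne, mul_comm]
    exact hsol.eq_mu _ hp
  have hν' := hν.ne
  simp only [Pi.div_apply]
  rw [e1, e2]
  generalize pdu D φ (t, v) = a at *
  generalize pdu D r (t, v) = b at *
  generalize pdv D r (t, v) = c at *
  generalize r (t, v) = x at *
  generalize m (t, v) = y at *
  rw [one_sub_div hr]
  field_simp
  ring

/-- Integrating factor: a solution of `g' = g k` on `[a, b]` is determined by its right endpoint
value. -/
lemma linear_ode_exp {a b : ℝ} (hab : a ≤ b) {g k : ℝ → ℝ} (hk : ContinuousOn k (Icc a b))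
    (hg : ∀ t ∈ Icc a b, HasDerivWithinAt g (g t * k t) (Icc a b) t) :
    g a = g b * Real.exp (-∫ t in a..b, k t) := by
  -- A continuous extension of `k` to `ℝ` has an everywhere differentiable primitive.
  set K : ℝ → ℝ := IccExtend hab ((Icc a b).domRestrict k) with hKdef
  have hK : Continuous K := (continuousOn_iff_continuous_domRestrict.mp hk).Icc_extend'
  have hKk : ∀ t ∈ Icc a b, K t = k t := fun t ht => IccExtend_of_mem hab _ ht
  have hint : ∫ t in a..b, k t = ∫ t in a..b, K t := by
    refine intervalIntegral.integral_congr fun t ht => ?_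
    rw [uIcc_of_le hab] at ht
    exact (hKk t ht).symm
  have hF : ∀ t, HasDerivAt (fun s => ∫ x in a..s, K x) (K t) t := fun t =>
    intervalIntegral.integral_hasDerivAt_right (hK.intervalIntegrable _ _)
      hK.aestronglyMeasurable.stronglyMeasurableAtFilter hK.continuousAt
  have hh : ∀ t ∈ Icc a b, HasDerivWithinAt
      (fun s => g s * Real.exp (-∫ x in a..s, K x)) 0 (Icc a b) t := by
    intro t ht
    refine ((hg t ht).mul (hF t).neg.exp.hasDerivWithinAt).congr_deriv ?_
    rw [hKk t ht]
    ring
  have hconst := constant_of_has_deriv_right_zero (fun t ht => (hh t ht).continuousWithinAt)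
    (fun t ht => (hh t (Ico_subset_Icc_self ht)).mono_of_mem_nhdsWithin
      (Icc_mem_nhdsGE_of_mem ht)) b (right_mem_Icc.mpr hab)
  simp only [intervalIntegral.integral_same, neg_zero, Real.exp_zero, mul_one] at hconst
  rw [hint, hconst]

/-- Monotonicity of `λ/(1-μ)`.  If the segment `[u,-R] × {v}` is
contained in `D`, `ν < 0` along it, and `(λ/(1-μ))(-R,v) ≥ 0`, then
`(λ/(1-μ))(u,v) = (λ/(1-μ))(-R,v)·exp(-∫_u^{-R} (ζ²/(rν))(ũ,v) dũ)
  ≥ (λ/(1-μ))(-R,v)`. -/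
theorem lam_over_one_sub_mu_monotone (R : ℝ) (hR : 0 < R)
    (D : Set (ℝ × ℝ)) (r m φ : ℝ × ℝ → ℝ) (hsol : EFSol R D r m φ)
    (u v : ℝ) (huv : ((u, v) : ℝ × ℝ) ∈ D)
    (hseg : ∀ t ∈ Icc u (-R), ((t, v) : ℝ × ℝ) ∈ D)
    (hν : ∀ t ∈ Icc u (-R), pdu D r (t, v) < 0)
    (h0 : 0 ≤ pdv D r (-R, v) / (1 - 2 * m (-R, v) / r (-R, v))) :
    pdv D r (u, v) / (1 - 2 * m (u, v) / r (u, v))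
      = pdv D r (-R, v) / (1 - 2 * m (-R, v) / r (-R, v))
        * Real.exp (-∫ t in u..(-R),
            (r (t, v) * pdu D φ (t, v)) ^ 2 / (r (t, v) * pdu D r (t, v))) ∧
    pdv D r (-R, v) / (1 - 2 * m (-R, v) / r (-R, v))
      ≤ pdv D r (u, v) / (1 - 2 * m (u, v) / r (u, v)) := by
  have huR : u ≤ -R := (hsol.subset huv).1
  have hD := uniqueDiffOn_of_relOpen hsol.relOpen
  have hpath : ContinuousOn (fun t : ℝ => ((t, v) : ℝ × ℝ)) (Icc u (-R)) := by fun_prop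
  have cr : ContinuousOn (fun t => r (t, v)) (Icc u (-R)) := hsol.hr.continuousOn.comp hpath hseg
  have cφ : ContinuousOn (fun t => pdu D φ (t, v)) (Icc u (-R)) :=
    (contDiffOn_dirDeriv hD hsol.hphi (1, 0)).continuousOn.comp hpath hseg
  have cν : ContinuousOn (fun t => pdu D r (t, v)) (Icc u (-R)) :=
    (contDiffOn_dirDeriv hD hsol.hr (1, 0)).continuousOn.comp hpath hseg
  have ck : ContinuousOn (fun t => (r (t, v) * pdu D φ (t, v)) ^ 2
      / (r (t, v) * pdu D r (t, v))) (Icc u (-R)) :=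
    ((cr.mul cφ).pow 2).div (cr.mul cν) fun t ht =>
      mul_ne_zero (hsol.rpos _ (hseg t ht)).ne' (hν t ht).ne
  have key := linear_ode_exp huR ck fun t ht => kappa_deriv hsol hseg ht (hν t ht)
  refine ⟨key, ?_⟩
  have hneg : ∫ t in u..(-R), (r (t, v) * pdu D φ (t, v)) ^ 2
      / (r (t, v) * pdu D r (t, v)) ≤ 0 := by
    rw [← neg_nonneg, ← intervalIntegral.integral_neg]
    refine intervalIntegral.integral_nonneg huR fun t ht => ?_
    rw [neg_nonneg]
    exact div_nonpos_of_nonneg_of_nonpos (sq_nonneg _)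
      (mul_nonpos_of_nonneg_of_nonpos (hsol.rpos _ (hseg t ht)).le (hν t ht).le)
  calc _ ≤ _ := le_mul_of_one_le_right h0 (Real.one_le_exp (neg_nonneg.mpr hneg))
    _ = _ := key.symm
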